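/- Let T(h) be the SR procedure. (i) Assume there exists I ∈ (0,∞) such that for all ε > 0: lim_{M→∞} P_0(max_{1≤n≤M} Z_n^0 ≥ I(1+ε)M) = 0, and for some r ≥ 1, Σ_{n≥1} n^{r−1} sup_{ν≥0} P_ν(Z_{ν+n}^ν/n < I − ε) < ∞. Then limsup_{h→∞} E_ν[((T(h)−ν)^+)^r]/(log h)^r ≤ 1/I^r for all ν ≥ 0, limsup_{h→∞} E_ν[(T(h)−ν)^r | T(h)>ν]/(log h)^r ≤ 1/I^r for all ν ≥ 0, and lim_{h→∞} sup_{ν≥0} E_ν[((T(h)−ν)^+)^r]/(log h)^r = 1/I^r. (ii) These three asymptotic relations hold if for all ε > 0, Σ_{n≥1} n^{r−1} sup_{ν≥0} P_ν(|Z_{ν+n}^ν/n − I| > ε) < ∞. (iii) In particular, for r = 1 they hold under condition (A2). -/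

import Mathlib

/-!
Upper bounds. As `R_{ν+n} ≥ exp Z_{ν+n}^ν`, the event `T(h) - ν > n` forces `Z_{ν+n}^ν < log h`,
which for `n ≥ N := ⌈log h / (I - ε)⌉` implies `Z_{ν+n}^ν / n < I - ε`. Summing the increments
`(n+1)^r - n^r = O(n^(r-1))` over these tails gives `E_ν[((T(h)-ν)⁺)^r] ≤ N^r + C(ε)` with
`C(ε) < ∞` independent of `ν` and `h` (`riskPow_SR_le`). Dividing by `(log h)^r`, letting `h → ∞`
and then `ε → 0` bounds the supremum over `ν`. The conditional version follows because
`P_ν(T(h) > ν) → 1` for fixed `ν` (`tendsto_P_lt_SR`).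

Lower bound. It suffices to take `ν = 0` and show `P_0(T(h) ≤ m) → 0` for
`m = ⌊(1 - ε) log h / I⌋`. Changing the measure on `F_m`,
`P_0(T(h) ≤ m) ≤ P_0(Z_m^0 ≥ I(1+ε)m) + exp(I(1+ε)m) P_∞(T(h) ≤ m)` (`P_zero_SR_le`). The first
term vanishes by the right-tail condition at the single time `m`. Since `E_∞ R_n ≤ n`, Markov's
inequality and a union bound give `P_∞(T(h) ≤ m) ≤ m² / h`, so the second term is at most
`m² h^(-ε²)`, which also vanishes (`tendsto_P_zero_SR_le`).

The argument uses only the left-tail condition and `RightTail`; each of the three sets of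
hypotheses implies both.
-/

open MeasureTheory Filter Set Topology ENNReal

noncomputable section

/-- A general change-point model: a filtration `F` on `Ω`, probability measures `P k`
(the change occurs immediately after time `k`) and `Pinf` (no change), such that `P k`
and `Pinf` agree on `F n` for `n ≤ k` and are mutually absolutely continuous
on `F n` for `n > k`. -/
structure ChangePointModel (Ω : Type) [m0 : MeasurableSpace Ω] where
  F : ℕ → MeasurableSpace Ω
  F_le : ∀ n, F n ≤ m0
  F_mono : Monotone F
  F_zero : F 0 = ⊥
  P : ℕ → Measure Ω
  Pinf : Measure Ω
  P_prob : ∀ k, IsProbabilityMeasure (P k)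
  Pinf_prob : IsProbabilityMeasure Pinf
  agree : ∀ k n : ℕ, n ≤ k → (P k).trim (F_le n) = Pinf.trim (F_le n)
  ac₁ : ∀ k n : ℕ, k < n → (P k).trim (F_le n) ≪ Pinf.trim (F_le n)
  ac₂ : ∀ k n : ℕ, k < n → Pinf.trim (F_le n) ≪ (P k).trim (F_le n)

namespace ChangePointModel

variable {Ω : Type} [m0 : MeasurableSpace Ω] (M : ChangePointModel Ω)

/-- The log-likelihood ratio `Z n k = log (d(P k|F n)/d(P∞|F n))`. -/
def Z (n k : ℕ) (ω : Ω) : ℝ :=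
  Real.log ((((M.P k).trim (M.F_le n)).rnDeriv (M.Pinf.trim (M.F_le n))) ω).toReal

/-- A detection procedure: a stopping time of the filtration `F` with values in `{1,2,…,∞}`. -/
def IsDetection (τ : Ω → ℕ∞) : Prop :=
  (∀ ω, 1 ≤ τ ω) ∧ ∀ n : ℕ, MeasurableSet[M.F n] {ω | τ ω ≤ (n : ℕ∞)}

/-- The detection risk `R_ν(τ) = E_ν (τ - ν)⁺`. -/
def risk (ν : ℕ) (τ : Ω → ℕ∞) : ℝ≥0∞ :=
  ∫⁻ ω, ((τ ω - (ν : ℕ∞) : ℕ∞) : ℝ≥0∞) ∂(M.P ν)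

/-- The conditional detection risk `R*_ν(τ) = E_ν (τ - ν | τ > ν)`. -/
def crisk (ν : ℕ) (τ : Ω → ℕ∞) : ℝ≥0∞ :=
  M.risk ν τ / M.P ν {ω | (ν : ℕ∞) < τ ω}

/-- The moment-`ℓ` detection risk `E_ν ((τ - ν)⁺)^ℓ`. -/
def riskPow (ℓ : ℝ) (ν : ℕ) (τ : Ω → ℕ∞) : ℝ≥0∞ :=
  ∫⁻ ω, ((τ ω - (ν : ℕ∞) : ℕ∞) : ℝ≥0∞) ^ ℓ ∂(M.P ν)

/-- The conditional moment-`ℓ` detection risk `E_ν ((τ - ν)^ℓ | τ > ν)`. -/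
def criskPow (ℓ : ℝ) (ν : ℕ) (τ : Ω → ℕ∞) : ℝ≥0∞ :=
  M.riskPow ℓ ν τ / M.P ν {ω | (ν : ℕ∞) < τ ω}

/-- The Bayesian class `Δ(α,ϱ)` of detection procedures with weighted probability of
false alarm at most `α` (geometric prior with parameter `ϱ`). -/
def Delta (α ϱ : ℝ) : Set (Ω → ℕ∞) :=
  {τ | M.IsDetection τ ∧
    ∑' k : ℕ, ENNReal.ofReal (ϱ * (1 - ϱ) ^ k) * M.Pinf {ω | τ ω ≤ (k : ℕ∞)}
      ≤ ENNReal.ofReal α}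

/-- The Shiryaev–Roberts statistic `R_n = ∑_{k=1}^n exp (Z_n^{k-1})`. -/
def SRstat (n : ℕ) (ω : Ω) : ℝ :=
  ∑ k ∈ Finset.range n, Real.exp (M.Z n k ω)

/-- The Shiryaev–Roberts procedure with threshold `h`. -/
def SR (h : ℝ) (ω : Ω) : ℕ∞ :=
  sInf {n : ℕ∞ | ∃ m : ℕ, n = (m : ℕ∞) ∧ 1 ≤ m ∧ h ≤ M.SRstat m ω}

/-- Condition (A1): `Z (k+n) k / n → I` almost surely under `P k`, for every `k`. -/
def CondA1 (I : ℝ) : Prop :=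
  ∀ k : ℕ, ∀ᵐ ω ∂(M.P k),
    Tendsto (fun n : ℕ => M.Z (k + n) k ω / n) atTop (𝓝 I)

/-- Condition (A2): uniform complete convergence of `Z (k+n) k / n` to `I`. -/
def CondA2 (I : ℝ) : Prop :=
  ∀ ε : ℝ, 0 < ε →
    (∑' n : ℕ, ⨆ k : ℕ,
      M.P k {ω | ε < |M.Z (k + (n + 1)) k ω / (n + 1) - I|}) < ⊤

/-- Uniform `r`-complete convergence of `Z (k+n) k / n` to `I`. -/
def CondAr (r I : ℝ) : Prop :=
  ∀ ε : ℝ, 0 < ε →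
    (∑' n : ℕ, ENNReal.ofReal ((n + 1 : ℝ) ^ (r - 1)) * ⨆ k : ℕ,
      M.P k {ω | ε < |M.Z (k + (n + 1)) k ω / (n + 1) - I|}) < ⊤

/-- The class `H(β,k*,m*)` : local probability of a false alarm in windows of
length `m*` starting at `1 ≤ k ≤ k* - m*` is at most `β`. -/
def Hclass (β : ℝ) (kstar mstar : ℕ) : Set (Ω → ℕ∞) :=
  {τ | M.IsDetection τ ∧ ∀ k : ℕ, 1 ≤ k → k + mstar ≤ kstar →
    M.Pinf {ω | (k : ℕ∞) ≤ τ ω ∧ τ ω < ((k + mstar : ℕ) : ℕ∞)} ≤ ENNReal.ofReal β}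

/-- The class `H*(β,k*,m*)` : local conditional probability of a false alarm
`P_∞(τ < k+m* | τ > k)` is at most `β` for `1 ≤ k ≤ k* - m*`. -/
def HclassStar (β : ℝ) (kstar mstar : ℕ) : Set (Ω → ℕ∞) :=
  {τ | M.IsDetection τ ∧ ∀ k : ℕ, 1 ≤ k → k + mstar ≤ kstar →
    M.Pinf {ω | (k : ℕ∞) < τ ω ∧ τ ω < ((k + mstar : ℕ) : ℕ∞)}
        / M.Pinf {ω | (k : ℕ∞) < τ ω} ≤ ENNReal.ofReal β}

end ChangePointModel

/-- `ϱ_{1,β} = 1/(1+|log β|)`. -/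
def rho1 (β : ℝ) : ℝ := 1 / (1 + |Real.log β|)

/-- `ϱ_{2,β} = ϱ_{1,β}/(1+|log|log β||)`. -/
def rho2 (β : ℝ) : ℝ := rho1 β / (1 + |Real.log (|Real.log β|)|)

/-- `α₁(β,m*) = β + (1-ϱ_{1,β})^{m*+1}`. -/
def alpha1 (β : ℝ) (m : ℕ) : ℝ := β + (1 - rho1 β) ^ (m + 1)

/-- `α₂(β,k*) = β (1-ϱ_{2,β})^{k*}`. -/
def alpha2 (β : ℝ) (k : ℕ) : ℝ := β * (1 - rho2 β) ^ k

/-- `α₃(β,k*) = β (1-ϱ_{2,β})^{k*} / (1+β)`. -/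
def alpha3 (β : ℝ) (k : ℕ) : ℝ := β * (1 - rho2 β) ^ k / (1 + β)

namespace ChangePointModel

variable {Ω : Type} [m0 : MeasurableSpace Ω] (M : ChangePointModel Ω)

/-- The three asymptotic relations of Proposition A.1 for the SR procedure `T(h)` as
`h → ∞`: upper bounds for the pointwise moment risks and conditional moment risks of order
`r`, and the exact first-order asymptotics of the supremum of the moment risks. -/
def ThreeRelations (r I : ℝ) : Prop :=
  (∀ ν : ℕ,
    Filter.limsup (fun h : ℝ =>
      M.riskPow r ν (M.SR h) / ENNReal.ofReal (Real.log h ^ r)) atTop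
      ≤ ENNReal.ofReal (1 / I ^ r)) ∧
  (∀ ν : ℕ,
    Filter.limsup (fun h : ℝ =>
      M.criskPow r ν (M.SR h) / ENNReal.ofReal (Real.log h ^ r)) atTop
      ≤ ENNReal.ofReal (1 / I ^ r)) ∧
  Tendsto (fun h : ℝ =>
      (⨆ ν : ℕ, M.riskPow r ν (M.SR h)) / ENNReal.ofReal (Real.log h ^ r)) atTop
    (𝓝 (ENNReal.ofReal (1 / I ^ r)))

/-- The condition `lim_{M→∞} P_0(max_{1≤n≤M} Z_n^0 ≥ I(1+ε)M) = 0` for all `ε > 0`. -/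
def PmaxCond (I : ℝ) : Prop :=
  ∀ ε : ℝ, 0 < ε →
    Tendsto (fun N : ℕ =>
        M.P 0 {ω | ∃ n : ℕ, 1 ≤ n ∧ n ≤ N ∧ I * (1 + ε) * N ≤ M.Z n 0 ω})
      atTop (𝓝 0)

/-- The one-sided (left-tail) uniform `r`-complete convergence condition. -/
def LeftTailCond (r I : ℝ) : Prop :=
  ∀ ε : ℝ, 0 < ε →
    (∑' n : ℕ, ENNReal.ofReal ((n + 1 : ℝ) ^ (r - 1)) * ⨆ ν : ℕ,
      M.P ν {ω | M.Z (ν + (n + 1)) ν ω / (n + 1) < I - ε}) < ⊤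

end ChangePointModel

namespace ChangePointModel

/-! ### Elementary facts -/

/-- The increments of `x ↦ x ^ r` are at most of order `x ^ (r - 1)`. -/
lemma add_one_rpow_le {r x : ℝ} (hr : 1 ≤ r) (hx : 1 ≤ x) :
    (x + 1) ^ r ≤ x ^ r + r * 2 ^ (r - 1) * x ^ (r - 1) := by
  have hx1 : 0 < x + 1 := by linarith
  -- Bernoulli's inequality at `-1 / (x + 1)`
  have hB := one_add_mul_self_le_rpow_one_add (s := -1 / (x + 1)) (p := r)
    (by rw [le_div_iff₀ hx1]; linarith) hr
  have e1 : 1 + -1 / (x + 1) = x / (x + 1) := by field_simp; ring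
  rw [e1, Real.div_rpow (by linarith) hx1.le] at hB
  have hp : 0 < (x + 1) ^ r := Real.rpow_pos_of_pos hx1 r
  rw [le_div_iff₀ hp] at hB
  have e2 : (x + 1) ^ (r - 1) = (x + 1) ^ r / (x + 1) := Real.rpow_sub_one hx1.ne' r
  have e3 : (1 + r * (-1 / (x + 1))) * (x + 1) ^ r
      = (x + 1) ^ r - r * (x + 1) ^ (r - 1) := by
    rw [e2]; field_simp; ring
  rw [e3] at hB
  have h4 : (x + 1) ^ (r - 1) ≤ 2 ^ (r - 1) * x ^ (r - 1) := by
    rw [← Real.mul_rpow (by norm_num) (by linarith)]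
    exact Real.rpow_le_rpow hx1.le (by linarith) (by linarith)
  have h5 := mul_le_mul_of_nonneg_left h4 (show 0 ≤ r by linarith)
  linarith

/-- Pointwise form of the tail-sum bound for moments: if every `n ≥ N` with `n < X` lies in `S`,
then `X ^ r` exceeds `N ^ r` by at most a constant multiple of `∑ n ^ (r - 1)` over `n ∈ S`. -/
lemma enat_rpow_le {r : ℝ} (hr : 1 ≤ r) (X : ℕ∞) (N : ℕ) (hN : 1 ≤ N) (S : Set ℕ)
    (hS : ∀ n : ℕ, N ≤ n → (n : ℕ∞) < X → n ∈ S) :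
    (X : ℝ≥0∞) ^ r ≤ (N : ℝ≥0∞) ^ r + ∑' n : ℕ, ENNReal.ofReal (r * 2 ^ (r - 1)) *
      (ENNReal.ofReal ((n + 1 : ℝ) ^ (r - 1)) * S.indicator 1 (n + 1)) := by
  set a : ℕ → ℝ≥0∞ := fun n => ENNReal.ofReal (r * 2 ^ (r - 1)) *
      (ENNReal.ofReal ((n + 1 : ℝ) ^ (r - 1)) * S.indicator 1 (n + 1)) with ha
  have hr0 : 0 ≤ r := by linarith
  have key : ∀ k : ℕ, ((k + 1 : ℕ) : ℕ∞) ≤ X →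
      ((k + 1 : ℕ) : ℝ≥0∞) ^ r ≤ (N : ℝ≥0∞) ^ r + ∑ n ∈ Finset.range k, a n := by
    intro k
    induction k with
    | zero =>
      intro _
      refine le_trans ?_ le_self_add
      exact ENNReal.rpow_le_rpow (by exact_mod_cast hN) hr0
    | succ k ih =>
      intro hk
      by_cases hkN : k + 1 + 1 ≤ N
      · refine le_trans ?_ le_self_add
        exact ENNReal.rpow_le_rpow (by exact_mod_cast hkN) hr0
      · have hlt : ((k + 1 : ℕ) : ℕ∞) < X :=
          lt_of_lt_of_le (by exact_mod_cast Nat.lt_succ_self (k + 1)) hk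
        have hmem : k + 1 ∈ S := hS (k + 1) (by omega) hlt
        have hak : a k = ENNReal.ofReal (r * 2 ^ (r - 1) * (k + 1 : ℝ) ^ (r - 1)) := by
          rw [ENNReal.ofReal_mul (by positivity)]
          simp [ha, hmem]
        rw [Finset.sum_range_succ, ← add_assoc]
        refine le_trans ?_ (add_le_add (ih hlt.le) le_rfl)
        rw [hak]
        have e : ∀ j : ℕ, (j : ℝ≥0∞) ^ r = ENNReal.ofReal ((j : ℝ) ^ r) := fun j => by
          rw [← ENNReal.ofReal_rpow_of_nonneg (by positivity) hr0, ENNReal.ofReal_natCast]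
        rw [e, e, ← ENNReal.ofReal_add (by positivity) (by positivity)]
        apply ENNReal.ofReal_le_ofReal
        have := add_one_rpow_le (r := r) (x := (k + 1 : ℝ)) hr
          (by have : (0 : ℝ) ≤ k := by positivity
              linarith)
        push_cast
        exact this
  have key2 : ∀ k : ℕ, ((k + 1 : ℕ) : ℕ∞) ≤ X →
      ((k + 1 : ℕ) : ℝ≥0∞) ^ r ≤ (N : ℝ≥0∞) ^ r + ∑' n, a n := fun k hk =>
    (key k hk).trans (add_le_add le_rfl (ENNReal.sum_le_tsum _))
  induction X using ENat.recTopCoe with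
  | top =>
    have : (N : ℝ≥0∞) ^ r + ∑' n, a n = ⊤ := by
      refine ENNReal.eq_top_of_forall_nnreal_le fun x => ?_
      obtain ⟨k, hk⟩ := exists_nat_ge x
      refine le_trans ?_ (key2 k le_top)
      calc (x : ℝ≥0∞) ≤ ((k + 1 : ℕ) : ℝ≥0∞) := by
            have : x ≤ ((k + 1 : ℕ) : NNReal) := hk.trans (by exact_mod_cast Nat.le_succ k)
            exact_mod_cast this
        _ ≤ ((k + 1 : ℕ) : ℝ≥0∞) ^ r := by
            apply ENNReal.le_rpow_self_of_one_le _ hr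
            exact_mod_cast Nat.le_add_left 1 k
    rw [this]; exact le_top
  | coe m =>
    rcases m with _ | k
    · simp [show 0 < r by linarith]
    · exact key2 k le_rfl

/-! ### Change of measure -/

lemma lintegral_exp_log_rnDeriv_le {α : Type*} {m : MeasurableSpace α} (μ ν : Measure α)
    [IsFiniteMeasure μ] [IsFiniteMeasure ν] (hνμ : ν ≪ μ) :
    ∫⁻ x, ENNReal.ofReal (Real.exp (Real.log (μ.rnDeriv ν x).toReal)) ∂ν ≤ μ univ := by
  refine le_trans (le_of_eq (lintegral_congr_ae ?_)) (Measure.lintegral_rnDeriv_le (ν := ν))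
  filter_upwards [Measure.rnDeriv_pos' hνμ, Measure.rnDeriv_lt_top μ ν] with x h0 h1
  rw [Real.exp_log (ENNReal.toReal_pos h0.ne' h1.ne), ENNReal.ofReal_toReal h1.ne]

lemma measure_le_log_rnDeriv_add {α : Type*} {m : MeasurableSpace α} (μ ν : Measure α)
    [IsFiniteMeasure μ] [IsFiniteMeasure ν] (hμν : μ ≪ ν) (C : ℝ) (s : Set α) :
    μ s ≤ μ {x | C ≤ Real.log (μ.rnDeriv ν x).toReal} + ENNReal.ofReal (Real.exp C) * ν s := by
  have hm : Measurable fun x => Real.log (μ.rnDeriv ν x).toReal :=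
    Real.measurable_log.comp (Measure.measurable_rnDeriv μ ν).ennreal_toReal
  set t := {x | C ≤ Real.log (μ.rnDeriv ν x).toReal} with ht
  have htm : MeasurableSet t := measurableSet_le measurable_const hm
  calc μ s ≤ μ (t ∪ s \ t) := measure_mono (by intro x hx; by_cases h : x ∈ t <;> simp [h, hx])
    _ ≤ μ t + μ (s \ t) := measure_union_le _ _
    _ ≤ μ t + ENNReal.ofReal (Real.exp C) * ν s := by
      gcongr
      rw [← Measure.setLIntegral_rnDeriv hμν (s \ t)]
      calc ∫⁻ x in s \ t, μ.rnDeriv ν x ∂ν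
          ≤ ∫⁻ _ in s \ t, ENNReal.ofReal (Real.exp C) ∂ν := by
            refine setLIntegral_mono_ae measurable_const.aemeasurable ?_
            filter_upwards [Measure.rnDeriv_lt_top μ ν] with x h1 hx
            have hlt : Real.log (μ.rnDeriv ν x).toReal < C := not_le.1 hx.2
            rw [← ENNReal.ofReal_toReal h1.ne]
            apply ENNReal.ofReal_le_ofReal
            rcases (ENNReal.toReal_nonneg (a := μ.rnDeriv ν x)).eq_or_lt with h | h
            · rw [← h]; positivity
            · exact (Real.log_lt_iff_lt_exp h).1 hlt |>.le
        _ = ENNReal.ofReal (Real.exp C) * ν (s \ t) := by simp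
        _ ≤ _ := by gcongr; exact sdiff_subset

variable {Ω : Type} [m0 : MeasurableSpace Ω] (M : ChangePointModel Ω)

lemma measurable_Z (n k : ℕ) : Measurable[M.F n] (M.Z n k) :=
  Real.measurable_log.comp (Measure.measurable_rnDeriv _ _).ennreal_toReal

lemma measurable_SRstat (n : ℕ) : Measurable[M.F n] (M.SRstat n) := by
  unfold SRstat
  exact @Finset.measurable_fun_sum _ _ _ _ _ _ (M.F n) _ _ fun k _ =>
    Real.measurable_exp.comp (M.measurable_Z n k)

lemma SR_le_iff (h : ℝ) (ω : Ω) (m : ℕ) :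
    M.SR h ω ≤ (m : ℕ∞) ↔ ∃ n : ℕ, 1 ≤ n ∧ n ≤ m ∧ h ≤ M.SRstat n ω := by
  unfold SR
  constructor
  · intro hle
    have hne : {n : ℕ∞ | ∃ m : ℕ, n = (m : ℕ∞) ∧ 1 ≤ m ∧ h ≤ M.SRstat m ω}.Nonempty := by
      by_contra hcon
      rw [Set.not_nonempty_iff_eq_empty] at hcon
      rw [hcon, sInf_empty] at hle
      exact absurd hle (by simp)
    obtain ⟨n, hn, h1, h2⟩ := csInf_mem hne
    exact ⟨n, h1, by rw [hn] at hle; exact_mod_cast hle, h2⟩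
  · rintro ⟨n, h1, h2, h3⟩
    exact sInf_le_of_le (b := (n : ℕ∞)) ⟨n, rfl, h1, h3⟩ (by exact_mod_cast h2)

lemma setOf_SR_le (h : ℝ) (m : ℕ) :
    {ω | M.SR h ω ≤ (m : ℕ∞)} = ⋃ n ∈ Finset.Icc 1 m, {ω | h ≤ M.SRstat n ω} := by
  ext ω
  simp [SR_le_iff, and_assoc]

lemma measurableSet_SR_le (h : ℝ) (m : ℕ) : MeasurableSet[M.F m] {ω | M.SR h ω ≤ (m : ℕ∞)} := by
  rw [setOf_SR_le]
  refine @Finset.measurableSet_biUnion _ _ (M.F m) _ _ fun n hn => ?_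
  refine M.F_mono (Finset.mem_Icc.1 hn).2 _ ?_
  exact M.measurable_SRstat n measurableSet_Ici

lemma lintegral_exp_Z_le {n k : ℕ} (hk : k < n) :
    ∫⁻ ω, ENNReal.ofReal (Real.exp (M.Z n k ω)) ∂M.Pinf ≤ 1 := by
  have := M.P_prob k
  have := M.Pinf_prob
  have h := lintegral_exp_log_rnDeriv_le ((M.P k).trim (M.F_le n)) (M.Pinf.trim (M.F_le n))
    (M.ac₂ k n hk)
  rw [trim_measurableSet_eq _ MeasurableSet.univ, measure_univ, lintegral_trim] at h
  · exact h
  · exact ENNReal.measurable_ofReal.comp (Real.measurable_exp.comp (M.measurable_Z n k))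

lemma lintegral_SRstat_le (n : ℕ) : ∫⁻ ω, ENNReal.ofReal (M.SRstat n ω) ∂M.Pinf ≤ n := by
  unfold SRstat
  simp_rw [ENNReal.ofReal_sum_of_nonneg (fun _ _ => (Real.exp_pos _).le)]
  rw [lintegral_finsetSum']
  · calc _ ≤ ∑ k ∈ Finset.range n, (1 : ℝ≥0∞) :=
        Finset.sum_le_sum fun k hk => M.lintegral_exp_Z_le (Finset.mem_range.1 hk)
      _ = n := by simp
  · intro k _
    exact (ENNReal.measurable_ofReal.comp (Real.measurable_exp.comp
      ((M.measurable_Z n k).mono (M.F_le n) le_rfl))).aemeasurable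

/-- The false-alarm bound. The union bound loses a factor `m` against the martingale bound
`m / h`, which is immaterial on the scale `m ~ log h`. -/
lemma Pinf_SR_le {h : ℝ} (hh : 0 < h) (m : ℕ) :
    M.Pinf {ω | M.SR h ω ≤ (m : ℕ∞)} ≤ ENNReal.ofReal ((m : ℝ) ^ 2 / h) := by
  rw [setOf_SR_le]
  have h1 : ∀ n ∈ Finset.Icc 1 m, M.Pinf {ω | h ≤ M.SRstat n ω} ≤ ENNReal.ofReal (m / h) := by
    intro n hn
    have hmeas : Measurable fun ω => ENNReal.ofReal (M.SRstat n ω) :=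
      ENNReal.measurable_ofReal.comp ((M.measurable_SRstat n).mono (M.F_le n) le_rfl)
    have hM := (meas_ge_le_lintegral_div (μ := M.Pinf) hmeas.aemeasurable
      (ε := ENNReal.ofReal h) (by simpa using hh) (by simp))
    refine (measure_mono fun ω hω => ?_).trans (hM.trans ?_)
    · exact ENNReal.ofReal_le_ofReal hω
    · rw [ENNReal.ofReal_div_of_pos hh, ENNReal.ofReal_natCast]
      gcongr
      refine (M.lintegral_SRstat_le n).trans ?_
      exact_mod_cast (Finset.mem_Icc.1 hn).2
  refine (measure_biUnion_finset_le _ _).trans ((Finset.sum_le_sum h1).trans ?_)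
  rw [Finset.sum_const, Nat.card_Icc, nsmul_eq_mul, Nat.add_sub_cancel,
    ← ENNReal.ofReal_natCast m, ← ENNReal.ofReal_mul (by positivity)]
  exact ENNReal.ofReal_le_ofReal (le_of_eq (by ring))

lemma P_zero_SR_le {h : ℝ} (hh : 0 < h) {m : ℕ} (hm : 0 < m) (C : ℝ) :
    M.P 0 {ω | M.SR h ω ≤ (m : ℕ∞)} ≤ M.P 0 {ω | C ≤ M.Z m 0 ω} +
      ENNReal.ofReal (Real.exp C) * ENNReal.ofReal ((m : ℝ) ^ 2 / h) := by
  have := M.P_prob 0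
  have := M.Pinf_prob
  have h1 := measure_le_log_rnDeriv_add ((M.P 0).trim (M.F_le m)) (M.Pinf.trim (M.F_le m))
    (M.ac₁ 0 m hm) C {ω | M.SR h ω ≤ (m : ℕ∞)}
  have hms : MeasurableSet[M.F m] {ω | C ≤ M.Z m 0 ω} :=
    M.measurable_Z m 0 measurableSet_Ici
  rw [trim_measurableSet_eq _ (M.measurableSet_SR_le h m),
    trim_measurableSet_eq _ (M.measurableSet_SR_le h m)] at h1
  have e : ((M.P 0).trim (M.F_le m)) {ω | C ≤ Real.log
      ((((M.P 0).trim (M.F_le m)).rnDeriv (M.Pinf.trim (M.F_le m))) ω).toReal}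
      = M.P 0 {ω | C ≤ M.Z m 0 ω} := trim_measurableSet_eq _ hms
  rw [e] at h1
  refine h1.trans ?_
  gcongr
  exact M.Pinf_SR_le hh m

/-! ### Upper bounds -/

lemma riskPow_SR_le {r I ε h : ℝ} (hr : 1 ≤ r) (hε : ε < I) (hh : 1 < h) (ν : ℕ) :
    M.riskPow r ν (M.SR h) ≤ ((⌈(I - ε)⁻¹ * Real.log h⌉₊ : ℕ) : ℝ≥0∞) ^ r +
      ENNReal.ofReal (r * 2 ^ (r - 1)) *
      ∑' n : ℕ, ENNReal.ofReal ((n + 1 : ℝ) ^ (r - 1)) * ⨆ ν : ℕ,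
        M.P ν {ω | M.Z (ν + (n + 1)) ν ω / (n + 1) < I - ε} := by
  have := M.P_prob ν
  set N := ⌈(I - ε)⁻¹ * Real.log h⌉₊ with hN
  have hIε : 0 < I - ε := by linarith
  have hlog : 0 < Real.log h := Real.log_pos hh
  have hN1 : 1 ≤ N := Nat.ceil_pos.2 (by positivity)
  have hNle : Real.log h ≤ N * (I - ε) := by
    have := Nat.le_ceil ((I - ε)⁻¹ * Real.log h)
    rw [← hN, inv_mul_le_iff₀ hIε] at this
    linarith
  let A : ℕ → Set Ω := fun n => {ω | M.Z (ν + (n + 1)) ν ω / (n + 1) < I - ε}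
  have hA : ∀ n, MeasurableSet (A n) := fun n =>
    measurableSet_lt (((M.measurable_Z _ ν).mono (M.F_le _) le_rfl).div_const _) measurable_const
  have hpt : ∀ ω, ((M.SR h ω - (ν : ℕ∞) : ℕ∞) : ℝ≥0∞) ^ r ≤ (N : ℝ≥0∞) ^ r +
      ∑' n : ℕ, ENNReal.ofReal (r * 2 ^ (r - 1)) *
      (ENNReal.ofReal ((n + 1 : ℝ) ^ (r - 1)) * (A n).indicator 1 ω) := by
    intro ω
    have := enat_rpow_le hr (M.SR h ω - (ν : ℕ∞)) N hN1
      {n | M.Z (ν + n) ν ω / n < I - ε} (by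
        intro n hn hlt
        have hn0 : (0 : ℝ) < n := by exact_mod_cast (lt_of_lt_of_le hN1 hn)
        have hlt' : ((ν + n : ℕ) : ℕ∞) < M.SR h ω := by
          push_cast; exact lt_tsub_iff_left.1 hlt
        have hno : ¬ h ≤ M.SRstat (ν + n) ω := fun hc =>
          absurd ((M.SR_le_iff h ω (ν + n)).2 ⟨ν + n, by omega, le_rfl, hc⟩) (not_le.2 hlt')
        have hexp : Real.exp (M.Z (ν + n) ν ω) < h := by
          refine lt_of_le_of_lt ?_ (not_le.1 hno)
          exact Finset.single_le_sum (f := fun k => Real.exp (M.Z (ν + n) k ω))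
            (fun k _ => (Real.exp_pos _).le) (Finset.mem_range.2 (by omega))
        have hZ := (Real.lt_log_iff_exp_lt (by linarith)).2 hexp
        show M.Z (ν + n) ν ω / n < I - ε
        rw [div_lt_iff₀ hn0]
        have : (N : ℝ) * (I - ε) ≤ n * (I - ε) := by gcongr
        linarith)
    refine this.trans (le_of_eq ?_)
    congr 1
    refine tsum_congr fun n => ?_
    simp [Set.indicator_apply, A]
  unfold riskPow
  calc _ ≤ ∫⁻ ω, ((N : ℝ≥0∞) ^ r + ∑' n : ℕ, ENNReal.ofReal (r * 2 ^ (r - 1)) *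
      (ENNReal.ofReal ((n + 1 : ℝ) ^ (r - 1)) * (A n).indicator 1 ω)) ∂(M.P ν) :=
        lintegral_mono hpt
    _ = (N : ℝ≥0∞) ^ r + ∑' n : ℕ, ENNReal.ofReal (r * 2 ^ (r - 1)) *
      (ENNReal.ofReal ((n + 1 : ℝ) ^ (r - 1)) * M.P ν (A n)) := by
        have hm1 : ∀ n, Measurable ((A n).indicator (1 : Ω → ℝ≥0∞)) := fun n =>
          measurable_one.indicator (hA n)
        rw [lintegral_add_left measurable_const, lintegral_tsum]
        · simp only [lintegral_const, measure_univ, mul_one]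
          congr 1
          refine tsum_congr fun n => ?_
          rw [lintegral_const_mul _ ((hm1 n).const_mul _), lintegral_const_mul _ (hm1 n),
            lintegral_indicator_one (hA n)]
        · exact fun n => (((hm1 n).const_mul _).const_mul _).aemeasurable
    _ ≤ _ := by
        rw [ENNReal.tsum_mul_left]
        gcongr with n
        exact le_iSup (fun ν => M.P ν {ω | M.Z (ν + (n + 1)) ν ω / (n + 1) < I - ε}) ν

/-- For a fixed change point, `T(h)` exceeds it with probability tending to one, since only
finitely many (finite) values of the statistic precede it. -/
lemma tendsto_P_lt_SR (ν : ℕ) :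
    Tendsto (fun h : ℝ => M.P ν {ω | (ν : ℕ∞) < M.SR h ω}) atTop (𝓝 1) := by
  have := M.P_prob ν
  have hmono : Monotone fun h : ℝ => {ω | (ν : ℕ∞) < M.SR h ω} := by
    intro h h' hh ω hω
    simp only [mem_ofPred_eq, ← not_le, SR_le_iff] at hω ⊢
    rintro ⟨n, h1, h2, h3⟩
    exact hω ⟨n, h1, h2, hh.trans h3⟩
  have hU : ⋃ h : ℝ, {ω | (ν : ℕ∞) < M.SR h ω} = univ := by
    refine eq_univ_of_forall fun ω => mem_iUnion.2 ?_
    refine ⟨∑ n ∈ Finset.range (ν + 1), |M.SRstat n ω| + 1, ?_⟩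
    simp only [mem_ofPred_eq, ← not_le, SR_le_iff]
    rintro ⟨n, h1, h2, h3⟩
    have h4 := Finset.single_le_sum (f := fun n => |M.SRstat n ω|)
      (fun k _ => abs_nonneg _) (Finset.mem_range.2 (show n < ν + 1 by omega))
    have h5 := le_abs_self (M.SRstat n ω)
    linarith
  have := tendsto_measure_iUnion_atTop (μ := M.P ν) hmono
  rwa [hU, measure_univ] at this

lemma tendsto_upper {r a : ℝ} (hr : 1 ≤ r) (ha : 0 < a) {K : ℝ≥0∞} (hK : K ≠ ⊤) :
    Tendsto (fun h : ℝ => (((⌈a⁻¹ * Real.log h⌉₊ : ℕ) : ℝ≥0∞) ^ r + K)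
      / ENNReal.ofReal (Real.log h ^ r)) atTop (𝓝 (ENNReal.ofReal (1 / a ^ r))) := by
  have hr0 : 0 < r := by linarith
  have h1 : Tendsto (fun x : ℝ => ((⌈a⁻¹ * x⌉₊ : ℝ) / x) ^ r + K.toReal / x ^ r) atTop
      (𝓝 (a⁻¹ ^ r + 0)) := by
    refine Tendsto.add ?_ ?_
    · exact (tendsto_nat_ceil_mul_div_atTop (by positivity)).rpow_const (Or.inr hr0.le)
    · exact tendsto_const_nhds.div_atTop (tendsto_rpow_atTop hr0)
  rw [add_zero, Real.inv_rpow ha.le] at h1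
  rw [one_div]
  have h2 := (ENNReal.tendsto_ofReal h1).comp Real.tendsto_log_atTop
  refine h2.congr' ?_
  filter_upwards [eventually_gt_atTop 1] with h hh
  have hl : 0 < Real.log h := Real.log_pos hh
  simp only [Function.comp_apply]
  rw [Real.div_rpow (by positivity) hl.le, ← add_div,
    ENNReal.ofReal_div_of_pos (by positivity), ENNReal.ofReal_add (by positivity) (by positivity),
    ENNReal.ofReal_toReal hK, ← ENNReal.ofReal_rpow_of_nonneg (by positivity) hr0.le,
    ENNReal.ofReal_natCast]

lemma le_ofReal_of_forall_sub {r I : ℝ} (hI : 0 < I) {L : ℝ≥0∞}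
    (hL : ∀ ε : ℝ, 0 < ε → ε < I → L ≤ ENNReal.ofReal (1 / (I - ε) ^ r)) :
    L ≤ ENNReal.ofReal (1 / I ^ r) := by
  have hc : Tendsto (fun ε : ℝ => ENNReal.ofReal (1 / (I - ε) ^ r)) (𝓝[>] 0)
      (𝓝 (ENNReal.ofReal (1 / I ^ r))) := by
    refine ENNReal.tendsto_ofReal ?_
    have h0 : Tendsto (fun ε : ℝ => I - ε) (𝓝[>] 0) (𝓝 I) := by
      have : Tendsto (fun ε : ℝ => I - ε) (𝓝 0) (𝓝 (I - 0)) :=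
        (continuous_const.sub continuous_id).tendsto 0
      rw [sub_zero] at this
      exact this.mono_left nhdsWithin_le_nhds
    exact tendsto_const_nhds.div (h0.rpow_const (Or.inl hI.ne'))
      (Real.rpow_pos_of_pos hI r).ne'
  refine ge_of_tendsto hc ?_
  filter_upwards [Ioo_mem_nhdsGT hI] with ε hε using hL ε hε.1 hε.2

lemma limsup_iSup_riskPow_le {r I : ℝ} (hI : 0 < I) (hr : 1 ≤ r) (hL : M.LeftTailCond r I) :
    limsup (fun h : ℝ => (⨆ ν : ℕ, M.riskPow r ν (M.SR h)) / ENNReal.ofReal (Real.log h ^ r))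
      atTop ≤ ENNReal.ofReal (1 / I ^ r) := by
  refine le_ofReal_of_forall_sub hI fun ε hε hεI => ?_
  rw [← (tendsto_upper hr (show 0 < I - ε by linarith) (ENNReal.mul_ne_top
    (ENNReal.ofReal_ne_top (r := r * 2 ^ (r - 1))) (hL ε hε).ne)).limsup_eq]
  refine limsup_le_limsup ?_
  filter_upwards [eventually_gt_atTop 1] with h hh
  exact ENNReal.div_le_div_right (iSup_le fun ν => M.riskPow_SR_le hr hεI hh ν) _

lemma limsup_criskPow_le {r I : ℝ} (hI : 0 < I) (hr : 1 ≤ r) (hL : M.LeftTailCond r I) (ν : ℕ) :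
    limsup (fun h : ℝ => M.criskPow r ν (M.SR h) / ENNReal.ofReal (Real.log h ^ r))
      atTop ≤ ENNReal.ofReal (1 / I ^ r) := by
  refine le_ofReal_of_forall_sub hI fun ε hε hεI => ?_
  have h1 := ENNReal.Tendsto.div (tendsto_upper hr (show 0 < I - ε by linarith)
    (ENNReal.mul_ne_top (ENNReal.ofReal_ne_top (r := r * 2 ^ (r - 1))) (hL ε hε).ne))
    (Or.inr one_ne_zero) (M.tendsto_P_lt_SR ν) (Or.inl ENNReal.one_ne_top)
  rw [div_one] at h1
  rw [← h1.limsup_eq]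
  refine limsup_le_limsup ?_
  filter_upwards [eventually_gt_atTop 1] with h hh
  rw [criskPow, ENNReal.div_right_comm]
  exact ENNReal.div_le_div_right (ENNReal.div_le_div_right (M.riskPow_SR_le hr hεI hh ν) _) _

/-! ### Lower bound -/

/-- The right-tail condition that drives the lower bound: under `P 0` the log-likelihood ratio
`Z_N^0` exceeds `I (1 + ε) N` with vanishing probability. It is weaker than both `PmaxCond` and
the two-sided conditions. -/
def RightTail (I : ℝ) : Prop :=
  ∀ ε : ℝ, 0 < ε →
    Tendsto (fun N : ℕ => M.P 0 {ω | I * (1 + ε) * N ≤ M.Z N 0 ω}) atTop (𝓝 0)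

lemma tendsto_floor_log {a : ℝ} (ha : 0 < a) :
    Tendsto (fun h : ℝ => ⌊a * Real.log h⌋₊) atTop atTop :=
  tendsto_nat_floor_atTop.comp (Real.tendsto_log_atTop.const_mul_atTop ha)

/-- Change of measure at time `m = ⌊(1 - ε) log h / I⌋` with level `I (1 + ε) m ≤ (1 - ε²) log h`:
the `P∞` term is at most `m² h ^ (-ε²)`. -/
lemma tendsto_P_zero_SR_le {I ε : ℝ} (hI : 0 < I) (hR : M.RightTail I) (hε : 0 < ε)
    (hε1 : ε < 1) :
    Tendsto (fun h : ℝ => M.P 0 {ω | M.SR h ω ≤ ((⌊(1 - ε) / I * Real.log h⌋₊ : ℕ) : ℕ∞)})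
      atTop (𝓝 0) := by
  have ha : 0 < (1 - ε) / I := div_pos (by linarith) hI
  have hfl := tendsto_floor_log ha
  have h1 := (hR ε hε).comp hfl
  have h2 : Tendsto (fun x : ℝ => ((1 - ε) / I) ^ 2 * (x ^ (2 : ℝ) * Real.exp (-(ε ^ 2) * x)))
      atTop (𝓝 (((1 - ε) / I) ^ 2 * 0)) :=
    (tendsto_rpow_mul_exp_neg_mul_atTop_nhds_zero 2 (ε ^ 2) (by positivity)).const_mul _
  rw [mul_zero] at h2
  have h3 := (ENNReal.tendsto_ofReal h2).comp Real.tendsto_log_atTop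
  rw [ENNReal.ofReal_zero] at h3
  have h4 := h1.add h3
  rw [add_zero] at h4
  refine tendsto_of_tendsto_of_tendsto_of_le_of_le' tendsto_const_nhds h4
    (Eventually.of_forall fun _ => zero_le) ?_
  filter_upwards [eventually_gt_atTop 1, hfl.eventually_gt_atTop 0] with h hh hm
  have hl : 0 < Real.log h := Real.log_pos hh
  have hh0 : 0 < h := by linarith
  simp only [Function.comp_apply]
  set m := ⌊(1 - ε) / I * Real.log h⌋₊ with hmdef
  refine (M.P_zero_SR_le hh0 hm (I * (1 + ε) * m)).trans ?_
  gcongr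
  rw [← ENNReal.ofReal_mul (Real.exp_pos _).le]
  apply ENNReal.ofReal_le_ofReal
  have hmle : (m : ℝ) ≤ (1 - ε) / I * Real.log h := Nat.floor_le (by positivity)
  have hC : I * (1 + ε) * m ≤ (1 - ε ^ 2) * Real.log h := by
    calc I * (1 + ε) * m ≤ I * (1 + ε) * ((1 - ε) / I * Real.log h) := by gcongr
      _ = _ := by field_simp; ring
  have hE : Real.exp (-(ε ^ 2) * Real.log h) = Real.exp ((1 - ε ^ 2) * Real.log h) / h := by
    nth_rewrite 3 [← Real.exp_log hh0]
    rw [← Real.exp_sub]; congr 1; ring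
  calc Real.exp (I * (1 + ε) * m) * ((m : ℝ) ^ 2 / h)
      ≤ Real.exp ((1 - ε ^ 2) * Real.log h) * (((1 - ε) / I * Real.log h) ^ 2 / h) := by gcongr
    _ = _ := by rw [hE, Real.rpow_two]; ring

lemma le_liminf_iSup_riskPow {r I : ℝ} (hI : 0 < I) (hr : 1 ≤ r) (hR : M.RightTail I) :
    ENNReal.ofReal (1 / I ^ r) ≤ liminf (fun h : ℝ =>
      (⨆ ν : ℕ, M.riskPow r ν (M.SR h)) / ENNReal.ofReal (Real.log h ^ r)) atTop := by
  have hr0 : 0 < r := by linarith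
  have := M.P_prob 0
  -- the bound at the change point `ν = 0` for a fixed `ε`
  have key : ∀ ε : ℝ, 0 < ε → ε < 1 → ENNReal.ofReal (((1 - ε) / I) ^ r) ≤ liminf (fun h : ℝ =>
      (⨆ ν : ℕ, M.riskPow r ν (M.SR h)) / ENNReal.ofReal (Real.log h ^ r)) atTop := by
    intro ε hε hε1
    have ha : 0 < (1 - ε) / I := div_pos (by linarith) hI
    have h1 := (ENNReal.tendsto_ofReal
      ((tendsto_nat_floor_mul_div_atTop ha.le).rpow_const (p := r) (Or.inr hr0.le))).comp
      Real.tendsto_log_atTop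
    have h2 : Tendsto (fun h : ℝ => 1 -
        M.P 0 {ω | M.SR h ω ≤ ((⌊(1 - ε) / I * Real.log h⌋₊ : ℕ) : ℕ∞)}) atTop (𝓝 (1 - 0)) :=
      ENNReal.Tendsto.sub tendsto_const_nhds (M.tendsto_P_zero_SR_le hI hR hε hε1)
        (Or.inl ENNReal.one_ne_top)
    rw [tsub_zero] at h2
    have h3 := ENNReal.Tendsto.mul h1 (Or.inr ENNReal.one_ne_top) h2 (Or.inl one_ne_zero)
    rw [mul_one] at h3
    rw [← h3.liminf_eq]
    refine liminf_le_liminf ?_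
    filter_upwards [eventually_gt_atTop 1] with h hh
    have hl : 0 < Real.log h := Real.log_pos hh
    simp only [Function.comp_apply]
    set m := ⌊(1 - ε) / I * Real.log h⌋₊ with hmdef
    have hms : MeasurableSet {ω | M.SR h ω ≤ (m : ℕ∞)} := M.F_le m _ (M.measurableSet_SR_le h m)
    rw [← prob_compl_eq_one_sub hms, Real.div_rpow (by positivity) hl.le,
      ENNReal.ofReal_div_of_pos (by positivity),
      ← ENNReal.ofReal_rpow_of_nonneg (by positivity) hr0.le, ENNReal.ofReal_natCast,
      ← ENNReal.mul_div_right_comm]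
    refine ENNReal.div_le_div_right (le_trans ?_ (le_iSup _ 0)) _
    rw [← lintegral_indicator_const hms.compl, riskPow]
    refine lintegral_mono fun ω => ?_
    refine Set.indicator_le' (f := fun _ => (m : ℝ≥0∞) ^ r)
      (g := fun ω => ((M.SR h ω - ((0 : ℕ) : ℕ∞) : ℕ∞) : ℝ≥0∞) ^ r) ?_ (fun _ _ => zero_le) ω
    intro ω hω
    have hlt : (m : ℕ∞) < M.SR h ω := not_le.1 hω
    have hle : ((m : ℕ∞) : ℝ≥0∞) ≤ ((M.SR h ω - ((0 : ℕ) : ℕ∞) : ℕ∞) : ℝ≥0∞) := by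
      rw [ENat.toENNReal_le]; simpa using hlt.le
    rw [ENat.toENNReal_coe] at hle
    exact ENNReal.rpow_le_rpow hle hr0.le
  have hc : Tendsto (fun ε : ℝ => ENNReal.ofReal (((1 - ε) / I) ^ r)) (𝓝[>] 0)
      (𝓝 (ENNReal.ofReal (1 / I ^ r))) := by
    refine ENNReal.tendsto_ofReal ?_
    have h0 : Tendsto (fun ε : ℝ => (1 - ε) / I) (𝓝[>] 0) (𝓝 (1 / I)) := by
      have : Tendsto (fun ε : ℝ => (1 - ε) / I) (𝓝 0) (𝓝 ((1 - 0) / I)) :=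
        ((continuous_const.sub continuous_id).div_const I).tendsto 0
      rw [sub_zero] at this
      exact this.mono_left nhdsWithin_le_nhds
    have := h0.rpow_const (p := r) (Or.inr hr0.le)
    rwa [Real.div_rpow zero_le_one hI.le, Real.one_rpow] at this
  refine le_of_tendsto hc ?_
  filter_upwards [Ioo_mem_nhdsGT zero_lt_one] with ε hε using key ε hε.1 hε.2

/-! ### The three relations and the sufficient conditions -/

lemma threeRelations_of_tails {r I : ℝ} (hI : 0 < I) (hr : 1 ≤ r) (hR : M.RightTail I)
    (hL : M.LeftTailCond r I) : M.ThreeRelations r I := by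
  refine ⟨fun ν => ?_, M.limsup_criskPow_le hI hr hL, ?_⟩
  · refine (limsup_le_limsup (Eventually.of_forall fun h => ?_)).trans
      (M.limsup_iSup_riskPow_le hI hr hL)
    exact ENNReal.div_le_div_right (le_iSup (fun ν => M.riskPow r ν (M.SR h)) ν) _
  · exact tendsto_of_le_liminf_of_limsup_le (M.le_liminf_iSup_riskPow hI hr hR)
      (M.limsup_iSup_riskPow_le hI hr hL)

lemma rightTail_of_pmaxCond {I : ℝ} (hP : M.PmaxCond I) : M.RightTail I := by
  intro ε hε
  refine tendsto_of_tendsto_of_tendsto_of_le_of_le' tendsto_const_nhds (hP ε hε)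
    (Eventually.of_forall fun _ => zero_le) ?_
  filter_upwards [eventually_ge_atTop 1] with N hN
  exact measure_mono fun ω hω => ⟨N, hN, le_rfl, hω⟩

lemma leftTailCond_of_condAr {r I : ℝ} (hA : M.CondAr r I) : M.LeftTailCond r I := by
  intro ε hε
  refine lt_of_le_of_lt (ENNReal.tsum_le_tsum fun n => ?_) (hA ε hε)
  refine mul_le_mul_right (iSup_mono fun ν => measure_mono fun ω hω => ?_) _
  have hω' : M.Z (ν + (n + 1)) ν ω / (n + 1) < I - ε := hω
  rw [mem_ofPred_eq, lt_abs]
  right; linarith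

lemma rightTail_of_condAr {r I : ℝ} (hI : 0 < I) (hr : 1 ≤ r) (hA : M.CondAr r I) :
    M.RightTail I := by
  intro ε hε
  rw [← tendsto_add_atTop_iff_nat 1]
  have h0 := ENNReal.tendsto_atTop_zero_of_tsum_ne_top (hA (I * ε / 2) (by positivity)).ne
  refine tendsto_of_tendsto_of_tendsto_of_le_of_le tendsto_const_nhds h0
    (fun _ => zero_le) fun n => ?_
  have hone : 1 ≤ ENNReal.ofReal ((n + 1 : ℝ) ^ (r - 1)) := by
    rw [ENNReal.one_le_ofReal]
    exact Real.one_le_rpow (by have : (0 : ℝ) ≤ n := by positivity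
                               linarith) (by linarith)
  refine le_trans ?_ (le_mul_of_one_le_left zero_le hone)
  refine le_trans (measure_mono fun ω hω => ?_) (le_iSup (fun k => M.P k
    {ω | I * ε / 2 < |M.Z (k + (n + 1)) k ω / (n + 1) - I|}) 0)
  have hn : (0 : ℝ) < n + 1 := by positivity
  have hω' : I * (1 + ε) * (n + 1 : ℝ) ≤ M.Z (n + 1) 0 ω := by simpa using hω
  have h1 : I * (1 + ε) ≤ M.Z (n + 1) 0 ω / (n + 1) := (le_div_iff₀ hn).2 hω'
  have hpos : 0 < I * ε := by positivity
  simp only [mem_ofPred_eq, zero_add]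
  rw [lt_abs]
  left; linarith

lemma condAr_one_of_condA2 {I : ℝ} (hA : M.CondA2 I) : M.CondAr 1 I := by
  intro ε hε
  simpa using hA ε hε

end ChangePointModel

/-- (i) If for some `I ∈ (0,∞)` and `r ≥ 1` the conditions `PmaxCond` and
the left-tail uniform `r`-complete convergence hold, then the three asymptotic relations for
the SR procedure `T(h)` as `h → ∞` hold. (ii) They also hold under the two-sided uniform
`r`-complete convergence condition. (iii) In particular, for `r = 1` they hold under (A2). -/
theorem statement13
    {Ω : Type} [m0 : MeasurableSpace Ω] (M : ChangePointModel Ω)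
    (I : ℝ) (hI : 0 < I) :
    (∀ r : ℝ, 1 ≤ r → M.PmaxCond I → M.LeftTailCond r I → M.ThreeRelations r I) ∧
    (∀ r : ℝ, 1 ≤ r → M.CondAr r I → M.ThreeRelations r I) ∧
    (M.CondA2 I → M.ThreeRelations 1 I) := by
  refine ⟨fun r hr hP hL => ?_, fun r hr hA => ?_, fun hA => ?_⟩
  · exact M.threeRelations_of_tails hI hr (M.rightTail_of_pmaxCond hP) hL
  · exact M.threeRelations_of_tails hI hr (M.rightTail_of_condAr hI hr hA)
      (M.leftTailCond_of_condAr hA)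
  · have hA1 := M.condAr_one_of_condA2 hA
    exact M.threeRelations_of_tails hI le_rfl (M.rightTail_of_condAr hI le_rfl hA1)
      (M.leftTailCond_of_condAr hA1)
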